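/- Let G be a group such that the center Z(G) has finite index m in G. Then the commutator subgroup G′ is finite, and its order is bounded by a function of m. -/

import Mathlib

/-!
A commutator `⁅a, b⁆` depends only on the cosets of `a` and `b` modulo the center, so a group whose
center has index `m` has at most `m ^ 2` commutators. By Schreier's lemma `G' ∩ Z(G)` is then
generated by at most `m * m ^ 2` elements, and each of them has order dividing `m`, because the
transfer `G → Z(G)` is `g ↦ g ^ m` and kills `G'`. Together with `|G' : G' ∩ Z(G)| ∣ m` this bounds
`|G'|`.
-/

universe u

section Commutators

open Subgroup (center)
open scoped commutatorElement

variable {G : Type*} [Group G]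

lemma commutatorElement_mul_left_of_commute (a : G) {b z : G} (h : Commute z b) :
    ⁅a * z, b⁆ = ⁅a, b⁆ := by
  rw [commutatorElement_mul_left_eq_conj_mul, h.commutator_eq, mul_one, mul_inv_cancel, one_mul]

lemma commutatorElement_mul_right_of_commute {a z : G} (b : G) (h : Commute a z) :
    ⁅a, b * z⁆ = ⁅a, b⁆ := by
  rw [← commutatorElement_inv, commutatorElement_mul_left_of_commute b h.symm,
    commutatorElement_inv]

lemma commutatorElement_out_out (a b : G) :
    ⁅(a : G ⧸ center G).out, (b : G ⧸ center G).out⁆ = ⁅a, b⁆ := by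
  obtain ⟨⟨z, hz⟩, ha⟩ := QuotientGroup.mk_out_eq_mul (center G) a
  obtain ⟨⟨w, hw⟩, hb⟩ := QuotientGroup.mk_out_eq_mul (center G) b
  have z_commute : Commute z (b * w) := (Subgroup.mem_center_iff.mp hz (b * w)).symm
  have w_commute : Commute a w := Subgroup.mem_center_iff.mp hw a
  rw [ha, hb, commutatorElement_mul_left_of_commute a z_commute,
    commutatorElement_mul_right_of_commute b w_commute]

variable (G)

lemma commutatorSet_eq_range_out :
    commutatorSet G =
      Set.range fun p : (G ⧸ center G) × (G ⧸ center G) ↦ ⁅p.1.out, p.2.out⁆ := by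
  apply Set.Subset.antisymm
  · rintro _ ⟨a, b, rfl⟩
    exact ⟨(a, b), commutatorElement_out_out a b⟩
  · rintro _ ⟨p, rfl⟩
    exact commutator_mem_commutatorSet _ _

lemma finite_commutatorSet_of_finiteIndex_center [(center G).FiniteIndex] :
    Finite (commutatorSet G) := by
  rw [commutatorSet_eq_range_out]
  infer_instance

lemma card_commutatorSet_le_index_center_sq [(center G).FiniteIndex] :
    Nat.card (commutatorSet G) ≤ (center G).index ^ 2 := by
  rw [commutatorSet_eq_range_out, Subgroup.index_eq_card, sq, ← Nat.card_prod]
  exact Finite.card_range_le _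

lemma card_commutator_dvd_index_center_pow_of_finiteIndex [(center G).FiniteIndex] :
    Nat.card (commutator G) ∣ (center G).index ^ ((center G).index ^ 3 + 1) := by
  have := finite_commutatorSet_of_finiteIndex_center G
  refine (Subgroup.card_commutator_dvd_index_center_pow G).trans (pow_dvd_pow _ ?_)
  rw [pow_succ' _ 2]
  gcongr
  exact card_commutatorSet_le_index_center_sq G

end Commutators

/-- Schur–Wiegold: if the center has finite index `m`, the derived subgroup is finite of
`m`-bounded order. -/
theorem schur_wiegold : ∃ f : ℕ → ℕ, ∀ (G : Type u) [inst : Group G] (m : ℕ),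
    (Subgroup.center G).index = m → m ≠ 0 →
    Finite (commutator G) ∧ Nat.card (commutator G) ≤ f m := by
  refine ⟨fun m ↦ m ^ (m ^ 3 + 1), ?_⟩
  rintro G _ _ rfl index_ne_zero
  have : (Subgroup.center G).FiniteIndex := ⟨index_ne_zero⟩
  have : Finite (commutatorSet G) := finite_commutatorSet_of_finiteIndex_center G
  have bound_pos : 0 < (Subgroup.center G).index ^ ((Subgroup.center G).index ^ 3 + 1) :=
    pow_pos (Nat.pos_of_ne_zero index_ne_zero) _
  exact ⟨inferInstance,
    Nat.le_of_dvd bound_pos (card_commutator_dvd_index_center_pow_of_finiteIndex G)⟩
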